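/- In the CreditRisk⁺ model, for every real z with 0 < z < ρ_g the probability generating function g_α(z) = E_α[z^L] is finite and satisfies g_α(z) = exp(S₀ (Σ_{i=1}^n r_{0,i} z^{ν_i} − 1)) · Π_{j=1}^k (1 + β_j − β_j Σ_{i=1}^n r_{j,i} z^{ν_i})^{−α_j}. -/

import Mathlib

/-!
Given the factors, the counts are independent Poisson variables, so the conditional expectation of
`z ^ L` is `exp (∑ i, R_i(S) * (z ^ ν i - 1))`. The intensities `R_i` are affine in the factors and
the weights sum to one; hence, with `P_j(z) = ∑ i, r j i * z ^ ν i`, this exponent equals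
`S₀ * (P_0(z) - 1) + ∑ j, (P_j(z) - 1) * S_j`. Integrating over the independent factors produces the
Gamma moment generating functions at `P_j(z) - 1`, which are finite as long as `P_j(z) - 1` stays
below the rate `1 / β j`. For negative `z` absolute convergence is decided at `|z|`.
-/

open MeasureTheory ProbabilityTheory Real

noncomputable section

/-- The gamma measure is sigma-finite (needed to form product measures). -/
instance gammaMeasure.instSigmaFinite (a r : ℝ) :
    SigmaFinite (gammaMeasure a r) := by
  unfold ProbabilityTheory.gammaMeasure ProbabilityTheory.gammaPDF
  infer_instance

/-- Conditional Poisson intensity `R_i(s) = r_{0,i} S_0 + sum_j r_{j,i} s_j`. -/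
def crpR {n k : ℕ} (S0 : ℝ) (r0 : Fin n → ℝ) (r : Fin k → Fin n → ℝ)
    (s : Fin k → ℝ) (i : Fin n) : ℝ :=
  r0 i * S0 + ∑ j, r j i * s j

/-- The CreditRisk⁺ measure `P_α` on `(Fin k → ℝ) × (Fin n → ℕ)`: the product of the
Gamma factor measures (shape `α j`, scale `β j`, i.e. rate `(β j)⁻¹`), composed with the
kernel sending the factor vector `s` to the product of Poisson measures with means `R_i(s)`,
recorded jointly with `s`. -/
def crpMeasure {n k : ℕ} (S0 : ℝ) (r0 : Fin n → ℝ) (r : Fin k → Fin n → ℝ)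
    (α β : Fin k → ℝ) : Measure ((Fin k → ℝ) × (Fin n → ℕ)) :=
  (Measure.pi fun j => gammaMeasure (α j) (β j)⁻¹).bind fun s =>
    (Measure.pi fun i => poissonMeasure (crpR S0 r0 r s i).toNNReal).map fun x => (s, x)

/-- Portfolio loss `L = ∑ ν_i N_i`. -/
def crpLoss {n k : ℕ} (ν : Fin n → ℕ) (x : (Fin k → ℝ) × (Fin n → ℕ)) : ℕ :=
  ∑ i, ν i * x.2 i

/-- Value-at-risk of the ℕ-valued loss `L` at level `δ`: the smallest `l` with
`P[L ≤ l] ≥ δ` (a natural number since `L` is ℕ-valued). -/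
def crpVaR {n k : ℕ} (P : Measure ((Fin k → ℝ) × (Fin n → ℕ)))
    (ν : Fin n → ℕ) (δ : ℝ) : ℕ :=
  sInf {l : ℕ | ENNReal.ofReal δ ≤ P {x | crpLoss ν x ≤ l}}

/-- `ρ_g`, the radius of convergence of the probability generating function. -/
def crpRadius {n k : ℕ} (ν : Fin n → ℕ) (r : Fin k → Fin n → ℝ) (β : Fin k → ℝ) : ℝ :=
  sSup {z : ℝ | 0 < z ∧ ∀ j, ∑ i, r j i * z ^ ν i < 1 + (β j)⁻¹}

section Poisson

variable (c : NNReal) (w : ℝ)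

lemma hasSum_poissonWeight_mul_pow :
    HasSum (fun m : ℕ => exp (-c) * (c : ℝ) ^ m / m.factorial * w ^ m) (exp (c * (w - 1))) := by
  have hexp : exp (c * (w - 1)) = exp (-c) * exp (c * w) := by
    rw [← exp_add]
    ring_nf
  have hterm (m : ℕ) : exp (-c) * (c : ℝ) ^ m / m.factorial * w ^ m =
      exp (-c) * ((c * w) ^ m / m.factorial) := by
    rw [mul_pow]
    ring
  simp_rw [hexp, hterm, exp_eq_exp_ℝ]
  exact (NormedSpace.expSeries_div_hasSum_exp ((c : ℝ) * w)).mul_left _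

lemma integrable_pow_poissonMeasure : Integrable (fun m : ℕ => w ^ m) (poissonMeasure c) := by
  simpa only [integrable_poissonMeasure_iff, norm_pow, norm_eq_abs] using
    (hasSum_poissonWeight_mul_pow c |w|).summable

lemma integral_pow_poissonMeasure :
    ∫ m : ℕ, w ^ m ∂poissonMeasure c = exp (c * (w - 1)) := by
  simpa only [integral_poissonMeasure, smul_eq_mul] using (hasSum_poissonWeight_mul_pow c w).tsum_eq

lemma measurable_poissonMeasure : Measurable poissonMeasure := by
  refine Measure.measurable_of_measurable_coe _ fun A hA => ?_
  simp only [poissonMeasure, Measure.sum_apply _ hA, Measure.smul_apply, smul_eq_mul]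
  fun_prop

end Poisson

section MixedPoisson

variable {X ι : Type*} [MeasurableSpace X] [Fintype ι]

lemma measurable_measurePi {E : ι → Type*} [∀ i, MeasurableSpace (E i)]
    {μ : X → ∀ i, Measure (E i)} [∀ x i, IsProbabilityMeasure (μ x i)]
    (hμ : ∀ i, Measurable fun x => μ x i) : Measurable fun x => Measure.pi (μ x) := by
  refine Measurable.measure_of_isPiSystem_of_isProbabilityMeasure generateFrom_pi.symm
    isPiSystem_pi ?_
  rintro _ ⟨A, hA, rfl⟩
  simp_rw [Measure.pi_pi]
  exact Finset.measurable_fun_prod _ fun i _ =>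
    (Measure.measurable_coe (hA i (Set.mem_univ i))).comp (hμ i)

/-- The Markov kernel sending `x` to the law of independent Poisson counts with means `R x i`;
composed with a law on `X` it gives a mixed Poisson model. -/
def poissonPiKernel (R : X → ι → NNReal) (hR : Measurable R) : Kernel X (ι → ℕ) where
  toFun x := Measure.pi fun i => poissonMeasure (R x i)
  measurable' := measurable_measurePi fun i =>
    measurable_poissonMeasure.comp ((measurable_pi_apply i).comp hR)

variable {R : X → ι → NNReal} {hR : Measurable R}

instance : IsMarkovKernel (poissonPiKernel R hR) :=
  ⟨fun x => inferInstanceAs (IsProbabilityMeasure (Measure.pi fun i => poissonMeasure (R x i)))⟩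

lemma integrable_prod_pow_poissonPiKernel (w : ι → ℝ) (x : X) :
    Integrable (fun N : ι → ℕ => ∏ i, w i ^ N i) (poissonPiKernel R hR x) :=
  Integrable.fintype_prod fun i => integrable_pow_poissonMeasure (R x i) (w i)

lemma integral_prod_pow_poissonPiKernel (w : ι → ℝ) (x : X) :
    ∫ N, ∏ i, w i ^ N i ∂poissonPiKernel R hR x = exp (∑ i, R x i * (w i - 1)) := by
  rw [exp_sum]
  simp_rw [← integral_pow_poissonMeasure]
  exact integral_fintype_prod_eq_prod fun i (m : ℕ) => w i ^ m

variable {μ : Measure X} [SFinite μ] {w : ι → ℝ}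

lemma integrable_prod_pow_compProd_poissonPiKernel_iff :
    Integrable (fun p => ∏ i, w i ^ p.2 i) (μ ⊗ₘ poissonPiKernel R hR) ↔
      Integrable (fun x => exp (∑ i, R x i * (|w i| - 1))) μ := by
  have hmeas : Measurable fun p : X × (ι → ℕ) => ∏ i, w i ^ p.2 i :=
    (measurable_of_countable fun N : ι → ℕ => ∏ i, w i ^ N i).comp measurable_snd
  simp only [Measure.integrable_compProd_iff hmeas.aestronglyMeasurable,
    integrable_prod_pow_poissonPiKernel, Filter.eventually_true, true_and, norm_prod, norm_pow,
    norm_eq_abs, integral_prod_pow_poissonPiKernel]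

lemma integral_prod_pow_compProd_poissonPiKernel
    (h : Integrable (fun x => exp (∑ i, R x i * (|w i| - 1))) μ) :
    ∫ p, ∏ i, w i ^ p.2 i ∂(μ ⊗ₘ poissonPiKernel R hR) =
      ∫ x, exp (∑ i, R x i * (w i - 1)) ∂μ := by
  simp_rw [Measure.integral_compProd (integrable_prod_pow_compProd_poissonPiKernel_iff.2 h),
    integral_prod_pow_poissonPiKernel]

end MixedPoisson

lemma bind_map_prodMk_eq_compProd {X Y : Type*} [MeasurableSpace X] [MeasurableSpace Y]
    (μ : Measure X) [SFinite μ] (κ : Kernel X Y) [IsSFiniteKernel κ] :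
    (μ.bind fun x => (κ x).map (Prod.mk x)) = μ ⊗ₘ κ := by
  rw [Measure.compProd_eq_comp_prod]
  congr 1 with x : 1
  rw [Kernel.prod_apply, Kernel.id_apply, Measure.dirac_prod]

section ProductMGF

variable {ι : Type*} [Fintype ι] {μ : ι → Measure ℝ} [∀ j, SigmaFinite (μ j)] {t : ι → ℝ}

lemma integrable_exp_sum_mul_measurePi (h : ∀ j, Integrable (fun x => exp (t j * x)) (μ j)) :
    Integrable (fun s => exp (∑ j, t j * s j)) (Measure.pi μ) := by
  simp_rw [exp_sum]
  exact Integrable.fintype_prod h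

lemma integral_exp_sum_mul_measurePi :
    ∫ s, exp (∑ j, t j * s j) ∂Measure.pi μ = ∏ j, mgf id (μ j) (t j) := by
  simp_rw [exp_sum]
  exact integral_fintype_prod_eq_prod fun j x => exp (t j * x)

end ProductMGF

section Gamma

lemma measurable_gammaPDF (a r : ℝ) : Measurable (gammaPDF a r) :=
  (measurable_gammaPDFReal a r).ennreal_ofReal

lemma ae_nonneg_gammaMeasure (a r : ℝ) : ∀ᵐ x ∂gammaMeasure a r, 0 ≤ x := by
  rw [gammaMeasure, ae_withDensity_iff (measurable_gammaPDF a r)]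
  refine ae_of_all _ fun x hx => ?_
  contrapose! hx
  exact gammaPDF_of_neg hx

variable {a r t : ℝ}

lemma gammaPDFReal_mul_exp (hr : 0 < r) (ht : t < r) (x : ℝ) :
    gammaPDFReal a r x * exp (t * x) = (1 - t / r) ^ (-a) * gammaPDFReal a (r - t) x := by
  have hrt : 0 < r - t := sub_pos.2 ht
  have hrate : r ^ a = (1 - t / r) ^ (-a) * (r - t) ^ a := by
    rw [one_sub_div hr.ne', rpow_neg (by positivity), div_rpow hrt.le hr.le, inv_div,
      div_mul_cancel₀ _ (rpow_pos_of_pos hrt a).ne']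
  have hexp : exp (-((r - t) * x)) = exp (-(r * x)) * exp (t * x) := by
    rw [← exp_add]
    ring_nf
  unfold gammaPDFReal
  split_ifs
  · rw [hexp, hrate]
    ring
  · simp

lemma one_sub_div_rpow_nonneg (hr : 0 < r) (ht : t ≤ r) (p : ℝ) : 0 ≤ (1 - t / r) ^ p :=
  rpow_nonneg (sub_nonneg.2 ((div_le_one hr).2 ht)) p

lemma lintegral_exp_mul_gammaMeasure (ha : 0 < a) (hr : 0 < r) (ht : t < r) :
    ∫⁻ x, ENNReal.ofReal (exp (t * x)) ∂gammaMeasure a r =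
      ENNReal.ofReal ((1 - t / r) ^ (-a)) := by
  have htilt (x : ℝ) : gammaPDF a r x * ENNReal.ofReal (exp (t * x)) =
      ENNReal.ofReal ((1 - t / r) ^ (-a)) * gammaPDF a (r - t) x := by
    rw [gammaPDF, gammaPDF, ← ENNReal.ofReal_mul (gammaPDFReal_nonneg ha hr x),
      gammaPDFReal_mul_exp hr ht, ENNReal.ofReal_mul (one_sub_div_rpow_nonneg hr ht.le _)]
  rw [gammaMeasure, lintegral_withDensity_eq_lintegral_mul _ (measurable_gammaPDF a r)
    (by fun_prop)]
  simp_rw [Pi.mul_apply, htilt]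
  rw [lintegral_const_mul _ (measurable_gammaPDF _ _),
    lintegral_gammaPDF_eq_one ha (sub_pos.2 ht), mul_one]

lemma integrable_exp_mul_gammaMeasure (ha : 0 < a) (hr : 0 < r) (ht : t < r) :
    Integrable (fun x => exp (t * x)) (gammaMeasure a r) := by
  rw [← lintegral_ofReal_ne_top_iff_integrable (by fun_prop) (ae_of_all _ fun _ => exp_nonneg _),
    lintegral_exp_mul_gammaMeasure ha hr ht]
  exact ENNReal.ofReal_ne_top

lemma mgf_id_gammaMeasure (ha : 0 < a) (hr : 0 < r) (ht : t < r) :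
    mgf id (gammaMeasure a r) t = (1 - t / r) ^ (-a) := by
  simp only [mgf, id_eq]
  rw [integral_eq_lintegral_of_nonneg_ae (ae_of_all _ fun _ => exp_nonneg _) (by fun_prop),
    lintegral_exp_mul_gammaMeasure ha hr ht,
    ENNReal.toReal_ofReal (one_sub_div_rpow_nonneg hr ht.le _)]

end Gamma

section CreditRisk

variable {n k : ℕ} {ν : Fin n → ℕ} {S0 : ℝ} {r0 : Fin n → ℝ} {r : Fin k → Fin n → ℝ}
  {α β : Fin k → ℝ} {s : Fin k → ℝ} {z : ℝ}

lemma pow_crpLoss (ν : Fin n → ℕ) (z : ℝ) (x : (Fin k → ℝ) × (Fin n → ℕ)) :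
    z ^ crpLoss ν x = ∏ i, (z ^ ν i) ^ x.2 i := by
  simp only [crpLoss, ← pow_mul, Finset.prod_pow_eq_pow_sum]

lemma crpR_nonneg (hS0 : 0 ≤ S0) (hr0 : ∀ i, 0 ≤ r0 i) (hr : ∀ j i, 0 ≤ r j i)
    (hs : ∀ j, 0 ≤ s j) (i : Fin n) : 0 ≤ crpR S0 r0 r s i :=
  add_nonneg (mul_nonneg (hr0 i) hS0) (Finset.sum_nonneg fun j _ => mul_nonneg (hr j i) (hs j))

lemma sum_crpR_mul_sub_one (hr0sum : ∑ i, r0 i = 1) (hrsum : ∀ j, ∑ i, r j i = 1)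
    (w : Fin n → ℝ) :
    ∑ i, crpR S0 r0 r s i * (w i - 1) =
      S0 * (∑ i, r0 i * w i - 1) + ∑ j, (∑ i, r j i * w i - 1) * s j := by
  have hweights {q : Fin n → ℝ} (hq : ∑ i, q i = 1) :
      ∑ i, q i * w i - 1 = ∑ i, q i * (w i - 1) := by
    simp_rw [mul_sub, mul_one, Finset.sum_sub_distrib, hq]
  simp_rw [hweights hr0sum, hweights (hrsum _), crpR, add_mul, Finset.sum_add_distrib,
    Finset.mul_sum, Finset.sum_mul]
  rw [Finset.sum_comm (s := Finset.univ (α := Fin k))]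
  congr 1
  · exact Finset.sum_congr rfl fun i _ => by ring
  · exact Finset.sum_congr rfl fun j _ => Finset.sum_congr rfl fun i _ => by ring

lemma measurable_toNNReal_crpR : Measurable fun s i => (crpR S0 r0 r s i).toNNReal := by
  unfold crpR
  fun_prop

lemma crpMeasure_eq_compProd (S0 : ℝ) (r0 : Fin n → ℝ) (r : Fin k → Fin n → ℝ)
    (α β : Fin k → ℝ) :
    crpMeasure S0 r0 r α β = (Measure.pi fun j => gammaMeasure (α j) (β j)⁻¹) ⊗ₘ
      poissonPiKernel (fun s i => (crpR S0 r0 r s i).toNNReal) measurable_toNNReal_crpR :=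
  bind_map_prodMk_eq_compProd _
    (poissonPiKernel (fun s i => (crpR S0 r0 r s i).toNNReal) measurable_toNNReal_crpR)

lemma ae_nonneg_pi_gammaMeasure (α β : Fin k → ℝ) :
    ∀ᵐ s ∂Measure.pi fun j => gammaMeasure (α j) (β j), ∀ j, 0 ≤ s j :=
  ae_all_iff.2 fun j =>
    Measure.tendsto_eval_ae_ae.eventually (ae_nonneg_gammaMeasure (α j) (β j))

lemma exp_sum_toNNReal_crpR_mul_sub_one (hS0 : 0 ≤ S0) (hr0 : ∀ i, 0 ≤ r0 i)
    (hr : ∀ j i, 0 ≤ r j i) (hr0sum : ∑ i, r0 i = 1) (hrsum : ∀ j, ∑ i, r j i = 1)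
    (hs : ∀ j, 0 ≤ s j) (w : Fin n → ℝ) :
    exp (∑ i, (crpR S0 r0 r s i).toNNReal * (w i - 1)) =
      exp (S0 * (∑ i, r0 i * w i - 1)) * exp (∑ j, (∑ i, r j i * w i - 1) * s j) := by
  simp_rw [coe_toNNReal _ (crpR_nonneg hS0 hr0 hr hs _)]
  rw [sum_crpR_mul_sub_one hr0sum hrsum, exp_add]

lemma sum_mul_pow_lt_of_lt_crpRadius (hr : ∀ j i, 0 ≤ r j i) (hz0 : 0 ≤ z)
    (hz : z < crpRadius ν r β) (j : Fin k) : ∑ i, r j i * z ^ ν i < 1 + (β j)⁻¹ := by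
  obtain ⟨y, ⟨-, hy⟩, hzy⟩ : ∃ y ∈ {y : ℝ | 0 < y ∧ ∀ j, ∑ i, r j i * y ^ ν i < 1 + (β j)⁻¹},
      z < y := by
    by_contra! hle
    exact (Real.sSup_le hle hz0).not_gt hz
  calc ∑ i, r j i * z ^ ν i ≤ ∑ i, r j i * y ^ ν i := by
        gcongr with i
        exact hr j i
    _ < 1 + (β j)⁻¹ := hy j

lemma sum_mul_pow_le_sum_mul_abs_pow {ι : Type*} [Fintype ι] {q : ι → ℝ} (hq : ∀ i, 0 ≤ q i)
    (z : ℝ) (ν : ι → ℕ) : ∑ i, q i * z ^ ν i ≤ ∑ i, q i * |z| ^ ν i := by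
  simp_rw [← abs_pow]
  gcongr with i
  · exact hq i
  · exact le_abs_self _

theorem crp_pgf_formula_general (hS0 : 0 ≤ S0) (hr0 : ∀ i, 0 ≤ r0 i) (hr : ∀ j i, 0 ≤ r j i)
    (hr0sum : ∑ i, r0 i = 1) (hrsum : ∀ j, ∑ i, r j i = 1) (hα : ∀ j, 0 < α j)
    (hβ : ∀ j, 0 < β j) (hz : ∀ j, ∑ i, r j i * |z| ^ ν i < 1 + (β j)⁻¹) :
    Integrable (fun x => z ^ crpLoss ν x) (crpMeasure S0 r0 r α β) ∧
    ∫ x, z ^ crpLoss ν x ∂(crpMeasure S0 r0 r α β)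
      = exp (S0 * (∑ i, r0 i * z ^ ν i - 1)) *
        ∏ j, (1 + β j - β j * ∑ i, r j i * z ^ ν i) ^ (-(α j)) := by
  have hrate j : 0 < (β j)⁻¹ := inv_pos.2 (hβ j)
  have habs j : ∑ i, r j i * |z| ^ ν i - 1 < (β j)⁻¹ := sub_lt_iff_lt_add'.2 (hz j)
  have hmgf j : mgf id (gammaMeasure (α j) (β j)⁻¹) (∑ i, r j i * z ^ ν i - 1) =
      (1 + β j - β j * ∑ i, r j i * z ^ ν i) ^ (-(α j)) := by
    rw [mgf_id_gammaMeasure (hα j) (hrate j)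
      ((sub_le_sub_right (sum_mul_pow_le_sum_mul_abs_pow (hr j) z ν) 1).trans_lt (habs j))]
    congr 1
    rw [div_inv_eq_mul]
    ring
  have hfactor (w : Fin n → ℝ) :=
    (ae_nonneg_pi_gammaMeasure α fun j => (β j)⁻¹).mono fun s hs =>
      exp_sum_toNNReal_crpR_mul_sub_one hS0 hr0 hr hr0sum hrsum hs w
  have hint : Integrable (fun s => exp (∑ i, (crpR S0 r0 r s i).toNNReal * (|z ^ ν i| - 1)))
      (Measure.pi fun j => gammaMeasure (α j) (β j)⁻¹) := by
    simp_rw [abs_pow]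
    rw [integrable_congr (hfactor fun i => |z| ^ ν i)]
    exact (integrable_exp_sum_mul_measurePi fun j =>
      integrable_exp_mul_gammaMeasure (hα j) (hrate j) (habs j)).const_mul _
  simp_rw [pow_crpLoss, crpMeasure_eq_compProd]
  refine ⟨integrable_prod_pow_compProd_poissonPiKernel_iff.2 hint, ?_⟩
  rw [integral_prod_pow_compProd_poissonPiKernel hint, integral_congr_ae (hfactor fun i => z ^ ν i),
    integral_const_mul, integral_exp_sum_mul_measurePi]
  simp_rw [hmgf]

end CreditRisk

/-- for `0 < z < ρ_g`, the pgf `g_α(z) = E_α[z^L]` is finite and equals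
`exp (S₀ (∑_i r_{0,i} z^{ν_i} − 1)) · ∏_j (1 + β_j − β_j ∑_i r_{j,i} z^{ν_i})^{−α_j}`. -/
theorem crp_pgf_formula {n k : ℕ} (hn : 0 < n) (hk : 0 < k)
    (ν : Fin n → ℕ) (hν : ∀ i, 0 < ν i)
    (S0 : ℝ) (hS0 : 0 ≤ S0)
    (r0 : Fin n → ℝ) (r : Fin k → Fin n → ℝ)
    (hr0 : ∀ i, 0 ≤ r0 i) (hr : ∀ j i, 0 ≤ r j i)
    (hr0sum : ∑ i, r0 i = 1) (hrsum : ∀ j, ∑ i, r j i = 1)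
    (hrpos : ∀ i, 0 < ∑ j, r j i)
    (α β : Fin k → ℝ) (hα : ∀ j, 0 < α j) (hβ : ∀ j, 0 < β j)
    (z : ℝ) (hz0 : 0 < z) (hzρ : z < crpRadius ν r β) :
    Integrable (fun x => z ^ crpLoss ν x) (crpMeasure S0 r0 r α β) ∧
    ∫ x, z ^ crpLoss ν x ∂(crpMeasure S0 r0 r α β)
      = Real.exp (S0 * (∑ i, r0 i * z ^ ν i - 1)) *
        ∏ j, (1 + β j - β j * ∑ i, r j i * z ^ ν i) ^ (-(α j)) :=
  crp_pgf_formula_general hS0 hr0 hr hr0sum hrsum hα hβ fun j => by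
    simpa only [abs_of_pos hz0] using sum_mul_pow_lt_of_lt_crpRadius hr hz0.le hzρ j
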